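/- arXiv:1202.0706 — 2 statements merged into one kernel-verified Lean document; each statement's English description precedes it below -/
import Mathlib

section
/- Let d ≥ 1 be an integer. Let φ : (0,∞) → (0,∞) be increasing and differentiable with φ' positive and decreasing, such that λ ↦ λ² φ'(λ)/φ(λ)² is increasing on (0,∞), and suppose there exist σ > 0, λ₀ > 0 and δ ∈ (0,1] such that φ'(λx) ≤ σ x^{−δ} φ'(λ) for all x ≥ 1 and λ ≥ λ₀. Let u : (0,∞) → (0,∞) be decreasing with ∫₀^∞ e^{−λt} u(t) dt = 1/φ(λ) for all λ > 0, and assume ∫₀^R λ^{d/2−1}/φ(λ) dλ < ∞ for some R > 0. When d ≤ 2, assume additionally that d + 2δ − 2 > 0 and there exist σ' > 0 and δ' with 1 − d/2 < δ' < min(1 + d/2, 2δ + (d−2)/2) such that φ'(λx) ≥ σ' x^{−δ'} φ'(λ) for all x ≥ 1 and λ ≥ λ₀. Then the function g(r) = ∫₀^∞ (4πt)^{−d/2} exp(−r²/(4t)) u(t) dt satisfies g(r) ≍ r^{−d−2} φ'(r^{−2})/φ(r^{−2})² as r → 0+, i.e. there exist constants c₁, c₂ > 0 and r₀ ∈ (0,1)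 with c₁ r^{−d−2} φ'(r^{−2})/φ(r^{−2})² ≤ g(r) ≤ c₂ r^{−d−2} φ'(r^{−2})/φ(r^{−2})² for all 0 < r < r₀. -/
open MeasureTheory Real Set

lemma rpow_mul_exp_neg_le_rpow_self {a y : ℝ} (ha : 0 < a) (hy : 0 < y) :
    y ^ a * exp (-y) ≤ a ^ a := by
  have h1 : y / a ≤ exp (y / a) := by linarith [add_one_le_exp (y / a)]
  have h2 : (y / a) ^ a ≤ exp y := by
    calc (y / a) ^ a ≤ (exp (y / a)) ^ a := rpow_le_rpow (by positivity) h1 ha.le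
      _ = exp y := by rw [← exp_mul, div_mul_cancel₀ _ ha.ne']
  rw [div_rpow hy.le ha.le, div_le_iff₀ (by positivity)] at h2
  rw [exp_neg, ← div_eq_mul_inv, div_le_iff₀ (exp_pos y)]
  linarith

lemma rpow_neg_mul_exp_neg_div_le {a ρ t : ℝ} (ha : 0 < a) (hρ : 0 < ρ) (ht : 0 < t) :
    t ^ (-a) * exp (-(ρ / (4 * t))) ≤ (4 * a) ^ a * ρ ^ (-a) := by
  have h := rpow_mul_exp_neg_le_rpow_self ha (show 0 < ρ / (4 * t) by positivity)
  rw [div_rpow hρ.le (by positivity), mul_rpow (by norm_num) ht.le] at h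
  rw [mul_rpow (by norm_num) ha.le, rpow_neg ht.le, rpow_neg hρ.le]
  have hρa : 0 < ρ ^ a := by positivity
  have hta : 0 < t ^ a := by positivity
  have h4a : (0:ℝ) < 4 ^ a := by positivity
  calc (t ^ a)⁻¹ * exp (-(ρ / (4 * t)))
      = (4 ^ a * (ρ ^ a)⁻¹) * (ρ ^ a / (4 ^ a * t ^ a) * exp (-(ρ / (4 * t)))) := by
        field_simp
    _ ≤ (4 ^ a * (ρ ^ a)⁻¹) * a ^ a := by gcongr
    _ = _ := by ring

/-- Lower bound for the increment of the Laplace transform of a decreasing function. -/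
lemma mul_le_laplace_sub {u : ℝ → ℝ} (hupos : ∀ t, 0 < t → 0 < u t)
    (hudec : ∀ s t, 0 < s → s ≤ t → u t ≤ u s)
    (hint : ∀ l, 0 < l → IntegrableOn (fun t => exp (-(l * t)) * u t) (Ioi 0))
    {l : ℝ} (hl : 0 < l) :
    exp (-1) * (1 - exp (-(1 / 2))) / 2 * (l⁻¹ * u l⁻¹) ≤
      (∫ t in Ioi (0:ℝ), exp (-(l * t)) * u t) -
        ∫ t in Ioi (0:ℝ), exp (-(2 * l * t)) * u t := by
  have h2l : 0 < 2 * l := by positivity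
  rw [← integral_sub (hint l hl) (hint _ h2l)]
  have hI : IntegrableOn (fun t => exp (-(l * t)) * u t - exp (-(2 * l * t)) * u t) (Ioi 0) :=
    (hint l hl).sub (hint _ h2l)
  have hsub : Ioc (l⁻¹ / 2) l⁻¹ ⊆ Ioi (0:ℝ) := fun t ht =>
    lt_of_le_of_lt (by positivity) ht.1
  have hsq : ∀ t, exp (-(2 * l * t)) = exp (-(l * t)) * exp (-(l * t)) := fun t => by
    rw [← exp_add]; ring_nf
  have hle1 : ∀ t, 0 < t → exp (-(l * t)) ≤ 1 := fun t ht => by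
    rw [exp_le_one_iff]; nlinarith
  calc exp (-1) * (1 - exp (-(1 / 2))) / 2 * (l⁻¹ * u l⁻¹)
      = ∫ _ in Ioc (l⁻¹ / 2) l⁻¹, exp (-1) * (1 - exp (-(1 / 2))) * u l⁻¹ := by
        rw [setIntegral_const, Real.volume_real_Ioc_of_le (by linarith [inv_pos.2 hl]), smul_eq_mul]
        ring
    _ ≤ ∫ t in Ioc (l⁻¹ / 2) l⁻¹, (exp (-(l * t)) * u t - exp (-(2 * l * t)) * u t) := by
        refine setIntegral_mono_on (integrableOn_const (by simp)) (IntegrableOn.mono_set hI hsub) measurableSet_Ioc ?_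
        intro t ht
        have ht0 : 0 < t := hsub ht
        have hlt : l * t ≤ 1 := by
          have := mul_le_mul_of_nonneg_left ht.2 hl.le
          rwa [mul_inv_cancel₀ hl.ne'] at this
        have hlt' : 1 / 2 ≤ l * t := by
          have := mul_le_mul_of_nonneg_left ht.1.le hl.le
          rwa [mul_div_assoc', mul_inv_cancel₀ hl.ne'] at this
        have e1 : exp (-1) ≤ exp (-(l * t)) := exp_le_exp.2 (by linarith)
        have e2 : exp (-(l * t)) ≤ exp (-(1 / 2)) := exp_le_exp.2 (by linarith)
        have e3 : exp (-(1 / 2 : ℝ)) ≤ 1 := by rw [exp_le_one_iff]; norm_num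
        have e4 := hudec t l⁻¹ ht0 ht.2
        have e5 := hupos l⁻¹ (inv_pos.2 hl)
        rw [hsq, ← sub_mul]
        have e6 : exp (-1) * (1 - exp (-(1 / 2))) ≤
            exp (-(l * t)) - exp (-(l * t)) * exp (-(l * t)) := by
          have := mul_le_mul e1 (sub_le_sub_left e2 1) (by linarith) (exp_pos _).le
          linarith
        exact mul_le_mul e6 e4 e5.le (le_trans (mul_nonneg (exp_pos _).le (by linarith)) e6)
    _ ≤ _ := by
        refine setIntegral_mono_set hI ?_ hsub.eventuallyLE
        filter_upwards [ae_restrict_mem measurableSet_Ioi] with t ht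
        have := hupos t ht
        have h1 := hle1 t ht
        simp only [Pi.zero_apply]
        rw [hsq, ← sub_mul]
        refine mul_nonneg ?_ this.le
        nlinarith [exp_pos (-(l * t))]

/-- Upper bound for the increment of the Laplace transform of a decreasing function `u` in terms
of one value of `u` and of a power bound near the origin. -/
lemma laplace_sub_le {u : ℝ → ℝ} (hupos : ∀ t, 0 < t → 0 < u t)
    (hudec : ∀ s t, 0 < s → s ≤ t → u t ≤ u s)
    (hint : ∀ l, 0 < l → IntegrableOn (fun t => exp (-(l * t)) * u t) (Ioi 0))
    {l s B α : ℝ} (hl : 0 < l) (hs : 0 < s) (hα : 0 < α)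
    (hB : ∀ t, 0 < t → t ≤ s → t * u t ≤ B * t ^ (α - 1)) :
    (∫ t in Ioi (0:ℝ), exp (-(l * t)) * u t) -
        (∫ t in Ioi (0:ℝ), exp (-(2 * l * t)) * u t) ≤ l * B * (s ^ α / α) + u s / l := by
  have h2l : 0 < 2 * l := by positivity
  rw [← integral_sub (hint l hl) (hint _ h2l)]
  have hI : IntegrableOn (fun t => exp (-(l * t)) * u t - exp (-(2 * l * t)) * u t) (Ioi 0) :=
    (hint l hl).sub (hint _ h2l)
  have hsq : ∀ t, exp (-(2 * l * t)) = exp (-(l * t)) * exp (-(l * t)) := fun t => by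
    rw [← exp_add]; ring_nf
  have hle1 : ∀ t, 0 < t → exp (-(l * t)) ≤ 1 := fun t ht => by
    rw [exp_le_one_iff]; nlinarith
  rw [← Ioc_union_Ioi_eq_Ioi hs.le, setIntegral_union (Ioc_disjoint_Ioi le_rfl) measurableSet_Ioi
    (IntegrableOn.mono_set hI Ioc_subset_Ioi_self)
    (IntegrableOn.mono_set hI (Ioi_subset_Ioi hs.le))]
  have hpow : IntegrableOn (fun t : ℝ => l * B * t ^ (α - 1)) (Ioc 0 s) :=
    ((intervalIntegrable_iff_integrableOn_Ioc_of_le hs.le).1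
      (intervalIntegral.intervalIntegrable_rpow' (by linarith))).const_mul _
  refine add_le_add ?_ ?_
  · calc ∫ t in Ioc 0 s, (exp (-(l * t)) * u t - exp (-(2 * l * t)) * u t)
        ≤ ∫ t in Ioc 0 s, l * B * t ^ (α - 1) := by
          refine setIntegral_mono_on (IntegrableOn.mono_set hI Ioc_subset_Ioi_self) hpow
            measurableSet_Ioc ?_
          intro t ht
          have h1 := hle1 t ht.1
          have h2 := hB t ht.1 ht.2
          have h3 := hupos t ht.1
          have h4 := add_one_le_exp (-(l * t))
          rw [hsq, ← sub_mul]
          have h5 : exp (-(l * t)) - exp (-(l * t)) * exp (-(l * t)) ≤ l * t := by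
            nlinarith [exp_pos (-(l * t))]
          calc _ ≤ l * t * u t := mul_le_mul_of_nonneg_right h5 h3.le
            _ = l * (t * u t) := by ring
            _ ≤ l * (B * t ^ (α - 1)) := by gcongr
            _ = _ := by ring
      _ = l * B * (s ^ α / α) := by
          rw [integral_const_mul, ← intervalIntegral.integral_of_le hs.le,
            integral_rpow (Or.inl (by linarith)), sub_add_cancel, zero_rpow hα.ne', sub_zero]
  · have hexp : IntegrableOn (fun t : ℝ => u s * exp (-l * t)) (Ioi s) :=
      (integrableOn_exp_mul_Ioi (neg_lt_zero.2 hl) s).const_mul _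
    calc ∫ t in Ioi s, (exp (-(l * t)) * u t - exp (-(2 * l * t)) * u t)
        ≤ ∫ t in Ioi s, u s * exp (-l * t) := by
          refine setIntegral_mono_on (IntegrableOn.mono_set hI (Ioi_subset_Ioi hs.le)) hexp
            measurableSet_Ioi ?_
          intro t ht
          have ht0 : 0 < t := hs.trans ht
          have h1 := hudec s t hs (le_of_lt ht)
          have h2 := hupos t ht0
          rw [neg_mul]
          nlinarith [exp_pos (-(l * t)), mul_pos (exp_pos (-(2 * l * t))) h2]
      _ ≤ u s / l := by
          rw [integral_const_mul, integral_exp_mul_Ioi (neg_lt_zero.2 hl)]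
          have h1 := hupos s hs
          have h2 : exp (-l * s) ≤ 1 := by rw [neg_mul]; exact hle1 s hs
          rw [neg_div_neg_eq, ← mul_div_assoc]
          gcongr
          exact mul_le_of_le_one_right h1.le h2

section Exponent

variable {φ φ' : ℝ → ℝ}

lemma div_sq_antitone (hφpos : ∀ l, 0 < l → 0 < φ l)
    (hφmono : ∀ s t, 0 < s → s ≤ t → φ s ≤ φ t) (hφ'pos : ∀ l, 0 < l → 0 < φ' l)
    (hφ'dec : ∀ s t, 0 < s → s ≤ t → φ' t ≤ φ' s) {s t : ℝ} (hs : 0 < s) (hst : s ≤ t) :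
    φ' t / φ t ^ 2 ≤ φ' s / φ s ^ 2 :=
  div_le_div₀ (hφ'pos s hs).le (hφ'dec s t hs hst) (pow_pos (hφpos s hs) 2)
    (pow_le_pow_left₀ (hφpos s hs).le (hφmono s t hs hst) 2)

lemma one_div_sub_one_div_bounds (hφpos : ∀ l, 0 < l → 0 < φ l)
    (hφmono : ∀ s t, 0 < s → s ≤ t → φ s ≤ φ t)
    (hderiv : ∀ l, 0 < l → HasDerivAt φ (φ' l) l) (hφ'pos : ∀ l, 0 < l → 0 < φ' l)
    (hφ'dec : ∀ s t, 0 < s → s ≤ t → φ' t ≤ φ' s) {l : ℝ} (hl : 0 < l) :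
    l * (φ' (2 * l) / φ (2 * l) ^ 2) ≤ 1 / φ l - 1 / φ (2 * l) ∧
      1 / φ l - 1 / φ (2 * l) ≤ l * (φ' l / φ l ^ 2) := by
  have hd : ∀ x, 0 < x → HasDerivAt (fun y => (φ y)⁻¹) (-φ' x / φ x ^ 2) x := fun x hx =>
    (hderiv x hx).fun_inv (hφpos x hx).ne'
  obtain ⟨c, hc, hc'⟩ := exists_hasDerivAt_eq_slope (fun y => (φ y)⁻¹)
    (fun x => -φ' x / φ x ^ 2) (show l < 2 * l by linarith)
    (fun x hx => (hd x (hl.trans_le hx.1)).continuousAt.continuousWithinAt)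
    (fun x hx => hd x (hl.trans hx.1))
  have hc0 : 0 < c := hl.trans hc.1
  have h1 := div_sq_antitone hφpos hφmono hφ'pos hφ'dec hl hc.1.le
  have h2 := div_sq_antitone hφpos hφmono hφ'pos hφ'dec hc0 hc.2.le
  have h3 : 1 / φ l - 1 / φ (2 * l) = l * (φ' c / φ c ^ 2) := by
    rw [eq_div_iff (by linarith)] at hc'
    rw [one_div, one_div, ← neg_sub, ← hc']
    ring
  rw [h3]
  exact ⟨by gcongr, by gcongr⟩

lemma mul_deriv_le_two_mul (hφpos : ∀ l, 0 < l → 0 < φ l)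
    (hderiv : ∀ l, 0 < l → HasDerivAt φ (φ' l) l)
    (hφ'dec : ∀ s t, 0 < s → s ≤ t → φ' t ≤ φ' s) {l : ℝ} (hl : 0 < l) :
    l * φ' l ≤ 2 * φ l := by
  obtain ⟨c, hc, hc'⟩ := exists_hasDerivAt_eq_slope φ φ' (show l / 2 < l by linarith)
    (fun x hx => (hderiv x (by linarith [hx.1])).continuousAt.continuousWithinAt)
    (fun x hx => hderiv x (by linarith [hx.1]))
  have hc0 : 0 < c := by linarith [hc.1]
  have h1 := hφ'dec c l hc0 hc.2.le
  have h2 := hφpos (l / 2) (by linarith)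
  rw [eq_div_iff (by linarith)] at hc'
  nlinarith

/-- Upper scaling of the derivative integrates to upper scaling of the function. -/
lemma le_rpow_mul_of_deriv_scaling {σ lam₀ δ γ : ℝ} (hφpos : ∀ l, 0 < l → 0 < φ l)
    (hderiv : ∀ l, 0 < l → HasDerivAt φ (φ' l) l) (hφ'pos : ∀ l, 0 < l → 0 < φ' l)
    (hφ'dec : ∀ s t, 0 < s → s ≤ t → φ' t ≤ φ' s)
    (hσ : 0 < σ) (hlam₀ : 0 < lam₀)
    (hA3 : ∀ x, 1 ≤ x → ∀ l, lam₀ ≤ l → φ' (l * x) ≤ σ * x ^ (-δ) * φ' l)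
    (hγδ : γ ≤ δ) (hγ1 : γ < 1) {l x : ℝ} (hl : lam₀ ≤ l) (hx : 1 ≤ x) :
    φ (l * x) ≤ (1 + 2 * σ / (1 - γ)) * x ^ (1 - γ) * φ l := by
  have hl0 : 0 < l := hlam₀.trans_le hl
  have hγ : 0 < 1 - γ := by linarith
  set K := 2 * σ * φ l / (1 - γ) with hK
  have hK0 : 0 < K := by have := hφpos l hl0; positivity
  have hd : ∀ y, 1 ≤ y → HasDerivAt (fun y => φ (l * y) - K * y ^ (1 - γ))
      (φ' (l * y) * l - K * ((1 - γ) * y ^ (1 - γ - 1))) y := fun y hy => by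
    have hy0 : 0 < y := by linarith
    have h1 : HasDerivAt (fun y => l * y) l y := by
      simpa using (hasDerivAt_id y).const_mul l
    exact ((hderiv (l * y) (by positivity)).comp y h1).sub
      ((hasDerivAt_rpow_const (Or.inl hy0.ne')).const_mul K)
  have hanti : AntitoneOn (fun y => φ (l * y) - K * y ^ (1 - γ)) (Ici 1) := by
    refine antitoneOn_of_deriv_nonpos (convex_Ici 1)
      (fun y hy => (hd y hy).continuousAt.continuousWithinAt)
      (fun y hy => (hd y (interior_subset hy)).differentiableAt.differentiableWithinAt) ?_
    intro y hy
    have hy1 : 1 ≤ y := interior_subset hy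
    have hy0 : 0 < y := by linarith
    rw [(hd y hy1).deriv]
    have h1 := hA3 y hy1 l hl
    have h2 : y ^ (-δ) ≤ y ^ (-γ) := rpow_le_rpow_of_exponent_le hy1 (by linarith)
    have h3 := mul_deriv_le_two_mul hφpos hderiv hφ'dec hl0
    have h4 := hφ'pos l hl0
    have h5 : φ' (l * y) * l ≤ 2 * σ * φ l * y ^ (-γ) := by
      calc φ' (l * y) * l ≤ σ * y ^ (-γ) * φ' l * l := by
            gcongr
            exact h1.trans (by gcongr)
        _ = σ * y ^ (-γ) * (l * φ' l) := by ring
        _ ≤ σ * y ^ (-γ) * (2 * φ l) := by gcongr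
        _ = _ := by ring
    have h6 : K * ((1 - γ) * y ^ (1 - γ - 1)) = 2 * σ * φ l * y ^ (-γ) := by
      rw [hK, show 1 - γ - 1 = -γ by ring]; field_simp
    linarith
  have h := hanti (mem_Ici.2 le_rfl) (mem_Ici.2 hx) hx
  simp only [mul_one, one_rpow] at h
  have h1 : 1 ≤ x ^ (1 - γ) := one_le_rpow hx hγ.le
  have h2 := hφpos l hl0
  have h3 : (1 + 2 * σ / (1 - γ)) * x ^ (1 - γ) * φ l =
      φ l * x ^ (1 - γ) + K * x ^ (1 - γ) := by rw [hK]; ring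
  rw [h3]
  nlinarith

/-- Scaling of `φ' / φ ^ 2` under two-sided scaling of `φ'`. -/
lemma div_sq_le_rpow_mul {σ σ' lam₀ δ δ' γ : ℝ} (hφpos : ∀ l, 0 < l → 0 < φ l)
    (hderiv : ∀ l, 0 < l → HasDerivAt φ (φ' l) l) (hφ'pos : ∀ l, 0 < l → 0 < φ' l)
    (hφ'dec : ∀ s t, 0 < s → s ≤ t → φ' t ≤ φ' s)
    (hσ : 0 < σ) (hlam₀ : 0 < lam₀) (hσ' : 0 < σ')
    (hA3 : ∀ x, 1 ≤ x → ∀ l, lam₀ ≤ l → φ' (l * x) ≤ σ * x ^ (-δ) * φ' l)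
    (hB : ∀ x, 1 ≤ x → ∀ l, lam₀ ≤ l → σ' * x ^ (-δ') * φ' l ≤ φ' (l * x))
    (hγδ : γ ≤ δ) (hγ1 : γ < 1) {l x : ℝ} (hl : lam₀ ≤ l) (hx : 1 ≤ x) :
    φ' l / φ l ^ 2 ≤ σ'⁻¹ * (1 + 2 * σ / (1 - γ)) ^ 2 * x ^ (δ' + 2 * (1 - γ)) *
      (φ' (l * x) / φ (l * x) ^ 2) := by
  have hl0 : 0 < l := hlam₀.trans_le hl
  have hx0 : 0 < x := by linarith
  have h1 := le_rpow_mul_of_deriv_scaling hφpos hderiv hφ'pos hφ'dec hσ hlam₀ hA3 hγδ hγ1 hl hx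
  have h2 := hB x hx l hl
  have hp := hφpos l hl0
  have hpx := hφpos (l * x) (by positivity)
  have h3 : φ' l ≤ σ'⁻¹ * x ^ δ' * φ' (l * x) := by
    rw [rpow_neg hx0.le] at h2
    calc φ' l = σ'⁻¹ * x ^ δ' * (σ' * (x ^ δ')⁻¹ * φ' l) := by field_simp
      _ ≤ _ := by gcongr
  have h4 := pow_le_pow_left₀ hpx.le h1 2
  have h5 := hφ'pos (l * x) (by positivity)
  have h6 : x ^ (δ' + 2 * (1 - γ)) = x ^ δ' * (x ^ (1 - γ)) ^ 2 := by
    rw [rpow_add hx0, mul_comm 2, rpow_mul hx0.le, rpow_two]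
  set A := 1 + 2 * σ / (1 - γ)
  rw [mul_div_assoc', div_le_div_iff₀ (by positivity) (by positivity)]
  calc φ' l * φ (l * x) ^ 2 ≤ (σ'⁻¹ * x ^ δ' * φ' (l * x)) * (A * x ^ (1 - γ) * φ l) ^ 2 := by
        gcongr
    _ = _ := by rw [h6]; ring

end Exponent

section Green

variable {u : ℝ → ℝ}

/-- Transience makes the integral defining the Green function converge. -/
lemma integrableOn_green {φ : ℝ → ℝ} {a C R ρ : ℝ} (ha : 0 < a) (hρ : 0 < ρ) (hR : 0 < R)
    (hupos : ∀ t, 0 < t → 0 < u t)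
    (hudec : ∀ s t, 0 < s → s ≤ t → u t ≤ u s)
    (hint : ∀ l, 0 < l → IntegrableOn (fun t => exp (-(l * t)) * u t) (Ioi 0))
    (hu : ∀ t, 0 < t → t * u t ≤ C * (1 / φ t⁻¹))
    (htrans : IntegrableOn (fun l => l ^ (a - 1) / φ l) (Ioo 0 R)) :
    IntegrableOn (fun t => (4 * π * t) ^ (-a) * exp (-(ρ / (4 * t))) * u t) (Ioi 0) := by
  have hπ := pi_pos
  have humeas : AEStronglyMeasurable u (volume.restrict (Ioi 0)) :=
    (aemeasurable_restrict_of_antitoneOn measurableSet_Ioi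
      fun s hs t _ hst => hudec s t hs hst).aestronglyMeasurable
  have hmeas : AEStronglyMeasurable
      (fun t => (4 * π * t) ^ (-a) * exp (-(ρ / (4 * t))) * u t) (volume.restrict (Ioi 0)) := by
    refine AEStronglyMeasurable.mul (Measurable.aestronglyMeasurable ?_) humeas
    fun_prop
  have hnn : ∀ t, 0 < t → 0 ≤ (4 * π * t) ^ (-a) * exp (-(ρ / (4 * t))) * u t := fun t ht => by
    have := hupos t ht
    positivity
  rw [← Ioc_union_Ioi_eq_Ioi (inv_pos.2 hR).le]
  have hsub1 : Ioc 0 R⁻¹ ⊆ Ioi (0:ℝ) := Ioc_subset_Ioi_self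
  have hsub2 : Ioi R⁻¹ ⊆ Ioi (0:ℝ) := Ioi_subset_Ioi (inv_pos.2 hR).le
  refine IntegrableOn.union ?_ ?_
  · have h1 : IntegrableOn (fun t => (4 * π) ^ (-a) * ((4 * a) ^ a * ρ ^ (-a)) * exp R⁻¹ *
        (exp (-(1 * t)) * u t)) (Ioc 0 R⁻¹) :=
      ((hint 1 one_pos).mono_set hsub1).const_mul _
    refine Integrable.mono' h1 (hmeas.mono_set hsub1) ?_
    filter_upwards [ae_restrict_mem measurableSet_Ioc] with t ht
    have ht0 : 0 < t := ht.1
    have hut := hupos t ht0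
    rw [norm_of_nonneg (hnn t ht0), mul_rpow (by positivity) ht0.le]
    have h2 := rpow_neg_mul_exp_neg_div_le ha hρ ht0
    have h3 : 1 ≤ exp R⁻¹ * exp (-(1 * t)) := by
      rw [← exp_add]; exact one_le_exp (by linarith [ht.2])
    calc (4 * π) ^ (-a) * t ^ (-a) * exp (-(ρ / (4 * t))) * u t
        = (4 * π) ^ (-a) * (t ^ (-a) * exp (-(ρ / (4 * t)))) * 1 * u t := by ring
      _ ≤ (4 * π) ^ (-a) * ((4 * a) ^ a * ρ ^ (-a)) * (exp R⁻¹ * exp (-(1 * t))) * u t := by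
          gcongr
      _ = _ := by ring
  · have h0 : IntegrableOn ((Ioo 0 R).indicator fun l => l ^ (a - 1) / φ l) (Ioi 0) :=
      ((integrable_indicator_iff measurableSet_Ioo).2 htrans).integrableOn
    have h1 := ((((integrableOn_Ioi_comp_rpow_iff' _ (neg_ne_zero.2 one_ne_zero)).2
      h0).mono_set hsub2).const_mul ((4 * π) ^ (-a) * C))
    refine Integrable.mono' h1 (hmeas.mono_set hsub2) ?_
    filter_upwards [ae_restrict_mem measurableSet_Ioi] with t ht
    have ht0 : 0 < t := hsub2 ht
    have hut := hupos t ht0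
    have hmem : t⁻¹ ∈ Ioo 0 R := ⟨inv_pos.2 ht0, inv_lt_of_inv_lt₀ hR ht⟩
    rw [norm_of_nonneg (hnn t ht0), mul_rpow (by positivity) ht0.le, rpow_neg_one,
      indicator_of_mem hmem, smul_eq_mul]
    have he : exp (-(ρ / (4 * t))) ≤ 1 := by
      rw [exp_le_one_iff, neg_nonpos]; positivity
    have e1 : t ^ (-1 - 1 : ℝ) * ((t⁻¹) ^ (a - 1) / φ t⁻¹) = t ^ (-a) * t⁻¹ * (1 / φ t⁻¹) := by
      rw [← rpow_neg_one t, ← rpow_mul ht0.le, ← rpow_add ht0, mul_div_assoc', ← rpow_add ht0]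
      ring_nf
    rw [e1]
    calc (4 * π) ^ (-a) * t ^ (-a) * exp (-(ρ / (4 * t))) * u t
        ≤ (4 * π) ^ (-a) * t ^ (-a) * 1 * u t := by gcongr
      _ = (4 * π) ^ (-a) * t ^ (-a) * t⁻¹ * (t * u t) := by field_simp
      _ ≤ (4 * π) ^ (-a) * t ^ (-a) * t⁻¹ * (C * (1 / φ t⁻¹)) :=
          mul_le_mul_of_nonneg_left (hu t ht0) (by positivity)
      _ = _ := by ring

/-- Lower bound for the Green function, from times comparable to `ρ`. -/
lemma green_lower {a ε ρ b : ℝ} (ha : 0 < a) (hε : 0 < ε) (hρ : 0 < ρ)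
    (hupos : ∀ t, 0 < t → 0 < u t) (hudec : ∀ s t, 0 < s → s ≤ t → u t ≤ u s)
    (hint : IntegrableOn (fun t => (4 * π * t) ^ (-a) * exp (-(ρ / (4 * t))) * u t) (Ioi 0))
    (hb : b * ρ ^ (-2 : ℝ) ≤ u (ε * ρ)) :
    (4 * π * ε) ^ (-a) * exp (-(1 / (2 * ε))) * (ε / 2) * b * ρ ^ (-a - 1) ≤
      ∫ t in Ioi (0:ℝ), (4 * π * t) ^ (-a) * exp (-(ρ / (4 * t))) * u t := by
  have hπ := pi_pos
  have hερ : 0 < ε * ρ := by positivity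
  have hsub : Ioc (ε * ρ / 2) (ε * ρ) ⊆ Ioi (0:ℝ) := fun t ht =>
    lt_of_le_of_lt (by positivity) ht.1
  have hpow : ρ ^ (-a) * ρ ^ (-2 : ℝ) * ρ = ρ ^ (-a - 1) := by
    rw [← rpow_add hρ, ← rpow_add_one hρ.ne']; ring_nf
  calc (4 * π * ε) ^ (-a) * exp (-(1 / (2 * ε))) * (ε / 2) * b * ρ ^ (-a - 1)
      = (4 * π * ε) ^ (-a) * exp (-(1 / (2 * ε))) * (ε / 2) * ρ ^ (-a) * ρ *
          (b * ρ ^ (-2 : ℝ)) := by rw [← hpow]; ring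
    _ ≤ (4 * π * ε) ^ (-a) * exp (-(1 / (2 * ε))) * (ε / 2) * ρ ^ (-a) * ρ * u (ε * ρ) := by
        gcongr
    _ = ∫ _ in Ioc (ε * ρ / 2) (ε * ρ),
          (4 * π * (ε * ρ)) ^ (-a) * exp (-(1 / (2 * ε))) * u (ε * ρ) := by
        rw [setIntegral_const, Real.volume_real_Ioc_of_le (by linarith), smul_eq_mul,
          ← mul_assoc (4 * π), mul_rpow (by positivity) hρ.le]
        ring
    _ ≤ ∫ t in Ioc (ε * ρ / 2) (ε * ρ), (4 * π * t) ^ (-a) * exp (-(ρ / (4 * t))) * u t := by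
        refine setIntegral_mono_on (integrableOn_const (by simp)) (hint.mono_set hsub)
          measurableSet_Ioc ?_
        intro t ht
        have ht0 : 0 < t := hsub ht
        have h1 := hudec t (ε * ρ) ht0 ht.2
        have h2 := hupos (ε * ρ) hερ
        have h3 : (4 * π * (ε * ρ)) ^ (-a) ≤ (4 * π * t) ^ (-a) :=
          rpow_le_rpow_of_nonpos (by positivity) (by gcongr; exact ht.2) (by linarith)
        have h4 : exp (-(1 / (2 * ε))) ≤ exp (-(ρ / (4 * t))) := by
          refine exp_le_exp.2 (neg_le_neg ?_)
          rw [div_le_div_iff₀ (by positivity) (by positivity)]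
          linarith [ht.1]
        gcongr
    _ ≤ _ := by
        refine setIntegral_mono_set hint ?_ hsub.eventuallyLE
        filter_upwards [ae_restrict_mem measurableSet_Ioi] with t ht
        have := hupos t ht
        have ht0 : 0 < t := ht
        simp only [Pi.zero_apply]
        positivity

/-- Upper bound for the Green function, splitting the time integral at `ρ` and `T`. -/
lemma green_upper {Φ : ℝ → ℝ} {a β C K T : ℝ} (ha : 0 < a) (hβ : β < 1 + a) (hC : 0 < C)
    (hK : 0 < K) (hT : 0 < T) (hupos : ∀ t, 0 < t → 0 < u t)
    (hΦpos : ∀ l, 0 < l → 0 < Φ l) (hΦ : ∀ s t, 0 < s → s ≤ t → Φ t ≤ Φ s)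
    (hu : ∀ t, 0 < t → u t ≤ C * t ^ (-2 : ℝ) * Φ t⁻¹)
    (hscal : ∀ ρ t, 0 < ρ → ρ ≤ t → t ≤ T → Φ t⁻¹ ≤ K * (t / ρ) ^ β * Φ ρ⁻¹)
    (hint : ∀ ρ, 0 < ρ →
      IntegrableOn (fun t => (4 * π * t) ^ (-a) * exp (-(ρ / (4 * t))) * u t) (Ioi 0)) :
    ∃ c, 0 < c ∧ ∀ ρ, 0 < ρ → ρ ≤ 1 → ρ ≤ T →
      (∫ t in Ioi (0:ℝ), (4 * π * t) ^ (-a) * exp (-(ρ / (4 * t))) * u t) ≤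
        c * (ρ ^ (-a - 1) * Φ ρ⁻¹) := by
  have hπ := pi_pos
  set P : ℝ := (4 * π) ^ (-a) with hP
  have hP0 : 0 < P := by positivity
  have hnn : ∀ ρ t, 0 < t → 0 ≤ (4 * π * t) ^ (-a) * exp (-(ρ / (4 * t))) * u t :=
    fun ρ t ht => by
      have := hupos t ht
      positivity
  -- The part of the integral over large times is bounded by a constant independent of `ρ`.
  set M : ℝ := exp (1 / (4 * T)) *
    ∫ t in Ioi (0:ℝ), (4 * π * t) ^ (-a) * exp (-(1 / (4 * t))) * u t
    with hM
  have hM0 : 0 ≤ M := mul_nonneg (exp_pos _).le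
    (setIntegral_nonneg measurableSet_Ioi fun t ht => hnn 1 t ht)
  have hΦT := hΦpos T⁻¹ (inv_pos.2 hT)
  set c₁ : ℝ := P * C * (4 * (a + 2)) ^ (a + 2)
  set c₂ : ℝ := P * C * K / (1 + a - β)
  set c₃ : ℝ := M * (K * T ^ β) / Φ T⁻¹
  have hβ' : 0 < 1 + a - β := by linarith
  have hc₁ : 0 < c₁ := by positivity
  have hc₂ : 0 < c₂ := by positivity
  have hc₃ : 0 ≤ c₃ := by positivity
  refine ⟨c₁ + (c₂ + c₃), by positivity, fun ρ hρ hρ1 hρT => ?_⟩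
  have hΦρ := hΦpos ρ⁻¹ (inv_pos.2 hρ)
  have hI := hint ρ hρ
  have hs1 : Ioc 0 ρ ⊆ Ioi (0:ℝ) := Ioc_subset_Ioi_self
  have hs2 : Ioi ρ ⊆ Ioi (0:ℝ) := Ioi_subset_Ioi hρ.le
  have hs3 : Ioc ρ T ⊆ Ioi (0:ℝ) := fun t ht => hρ.trans ht.1
  have hs4 : Ioi T ⊆ Ioi (0:ℝ) := Ioi_subset_Ioi hT.le
  rw [← Ioc_union_Ioi_eq_Ioi hρ.le, setIntegral_union (Ioc_disjoint_Ioi le_rfl) measurableSet_Ioi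
    (hI.mono_set hs1) (hI.mono_set hs2), ← Ioc_union_Ioi_eq_Ioi hρT,
    setIntegral_union (Ioc_disjoint_Ioi le_rfl) measurableSet_Ioi
    (hI.mono_set hs3) (hI.mono_set hs4), add_mul, add_mul]
  refine add_le_add ?_ (add_le_add ?_ ?_)
  · calc ∫ t in Ioc 0 ρ, (4 * π * t) ^ (-a) * exp (-(ρ / (4 * t))) * u t
        ≤ ∫ _ in Ioc 0 ρ, c₁ * ρ ^ (-(a + 2)) * Φ ρ⁻¹ := by
          refine setIntegral_mono_on (hI.mono_set hs1) (integrableOn_const (by simp))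
            measurableSet_Ioc ?_
          intro t ht
          have ht0 : 0 < t := ht.1
          have h1 : Φ t⁻¹ ≤ Φ ρ⁻¹ :=
            hΦ _ _ (inv_pos.2 hρ) (inv_anti₀ ht0 ht.2)
          have h2 := rpow_neg_mul_exp_neg_div_le (show 0 < a + 2 by linarith) hρ ht0
          have h3 : t ^ (-(a + 2)) = t ^ (-a) * t ^ (-2 : ℝ) := by
            rw [← rpow_add ht0]; ring_nf
          rw [mul_rpow (by positivity) ht0.le, ← hP]
          calc P * t ^ (-a) * exp (-(ρ / (4 * t))) * u t
              ≤ P * t ^ (-a) * exp (-(ρ / (4 * t))) * (C * t ^ (-2 : ℝ) * Φ ρ⁻¹) := by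
                gcongr
                exact (hu t ht0).trans (by gcongr)
            _ = P * C * (t ^ (-(a + 2)) * exp (-(ρ / (4 * t)))) * Φ ρ⁻¹ := by rw [h3]; ring
            _ ≤ P * C * ((4 * (a + 2)) ^ (a + 2) * ρ ^ (-(a + 2))) * Φ ρ⁻¹ := by gcongr
            _ = _ := by ring
      _ = c₁ * (ρ ^ (-a - 1) * Φ ρ⁻¹) := by
          have h : ρ ^ (-a - 1) = ρ ^ (-(a + 2)) * ρ := by
            rw [← rpow_add_one hρ.ne']; ring_nf
          rw [setIntegral_const, Real.volume_real_Ioc_of_le hρ.le, smul_eq_mul, h]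
          ring
  · have hp : -a - 2 + β < -1 := by linarith
    have hpow : IntegrableOn (fun t : ℝ => P * C * K * ρ ^ (-β) * Φ ρ⁻¹ * t ^ (-a - 2 + β))
        (Ioi ρ) := (integrableOn_Ioi_rpow_of_lt hp hρ).const_mul _
    calc ∫ t in Ioc ρ T, (4 * π * t) ^ (-a) * exp (-(ρ / (4 * t))) * u t
        ≤ ∫ t in Ioc ρ T, P * C * K * ρ ^ (-β) * Φ ρ⁻¹ * t ^ (-a - 2 + β) := by
          refine setIntegral_mono_on (hI.mono_set hs3) (hpow.mono_set Ioc_subset_Ioi_self)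
            measurableSet_Ioc ?_
          intro t ht
          have ht0 : 0 < t := hs3 ht
          have h1 := hscal ρ t hρ ht.1.le ht.2
          have he : exp (-(ρ / (4 * t))) ≤ 1 := by
            rw [exp_le_one_iff, neg_nonpos]; positivity
          have h2 : t ^ (-a - 2 + β) = t ^ (-a) * t ^ (-2 : ℝ) * t ^ β := by
            rw [← rpow_add ht0, ← rpow_add ht0]; ring_nf
          have h3 : (t / ρ) ^ β = t ^ β * ρ ^ (-β) := by
            rw [div_rpow ht0.le hρ.le, rpow_neg hρ.le, div_eq_mul_inv]
          rw [mul_rpow (by positivity) ht0.le, ← hP]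
          calc P * t ^ (-a) * exp (-(ρ / (4 * t))) * u t
              ≤ P * t ^ (-a) * 1 * (C * t ^ (-2 : ℝ) * (K * (t / ρ) ^ β * Φ ρ⁻¹)) := by
                have := hupos t ht0
                gcongr
                exact (hu t ht0).trans (by gcongr)
            _ = _ := by rw [h2, h3]; ring
      _ ≤ ∫ t in Ioi ρ, P * C * K * ρ ^ (-β) * Φ ρ⁻¹ * t ^ (-a - 2 + β) := by
          refine setIntegral_mono_set hpow ?_ Ioc_subset_Ioi_self.eventuallyLE
          filter_upwards [ae_restrict_mem measurableSet_Ioi] with t ht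
          have ht0 : 0 < t := hs2 ht
          simp only [Pi.zero_apply]
          positivity
      _ = c₂ * (ρ ^ (-a - 1) * Φ ρ⁻¹) := by
          have h : ρ ^ (-a - 1) = ρ ^ (-β) * ρ ^ (-a - 2 + β + 1) := by
            rw [← rpow_add hρ]; ring_nf
          rw [integral_const_mul, integral_Ioi_rpow_of_lt hp hρ, h,
            show -a - 2 + β + 1 = -(1 + a - β) by ring, neg_div_neg_eq]
          simp only [c₂]
          ring
  · have hI1 := hint 1 one_pos
    have h1 : ∫ t in Ioi T, (4 * π * t) ^ (-a) * exp (-(ρ / (4 * t))) * u t ≤ M := by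
      calc ∫ t in Ioi T, (4 * π * t) ^ (-a) * exp (-(ρ / (4 * t))) * u t
          ≤ ∫ t in Ioi T, exp (1 / (4 * T)) *
              ((4 * π * t) ^ (-a) * exp (-(1 / (4 * t))) * u t) := by
            refine setIntegral_mono_on (hI.mono_set hs4) ((hI1.mono_set hs4).const_mul _)
              measurableSet_Ioi ?_
            intro t ht
            have ht0 : 0 < t := hs4 ht
            have hTt : T < t := ht
            have hut := hupos t ht0
            have he : exp (-(ρ / (4 * t))) ≤ exp (1 / (4 * T)) * exp (-(1 / (4 * t))) := by
              rw [← exp_add, exp_le_exp]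
              have : 1 / (4 * t) ≤ 1 / (4 * T) := by gcongr
              have : 0 ≤ ρ / (4 * t) := by positivity
              linarith
            calc (4 * π * t) ^ (-a) * exp (-(ρ / (4 * t))) * u t
                ≤ (4 * π * t) ^ (-a) * (exp (1 / (4 * T)) * exp (-(1 / (4 * t)))) * u t := by
                  gcongr
              _ = _ := by ring
        _ ≤ M := by
            rw [integral_const_mul, hM]
            gcongr
            filter_upwards [ae_restrict_mem measurableSet_Ioi] with t ht using hnn 1 t ht
    have h2 := hscal ρ T hρ hρT le_rfl
    have h3 : ρ ^ (-β) ≤ ρ ^ (-a - 1) := rpow_le_rpow_of_exponent_ge hρ hρ1 (by linarith)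
    have h4 : (T / ρ) ^ β = T ^ β * ρ ^ (-β) := by
      rw [div_rpow hT.le hρ.le, rpow_neg hρ.le, div_eq_mul_inv]
    refine h1.trans ?_
    calc M = M / Φ T⁻¹ * Φ T⁻¹ := (div_mul_cancel₀ _ hΦT.ne').symm
      _ ≤ M / Φ T⁻¹ * (K * (T ^ β * ρ ^ (-a - 1)) * Φ ρ⁻¹) := by
          gcongr
          rw [h4] at h2
          exact h2.trans (by gcongr)
      _ = _ := by simp only [c₃]; ring

end Green

/-- A decreasing function is bounded below, near the origin, by the increments of its Laplace
transform. -/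
lemma exists_le_potential {u Φ : ℝ → ℝ} {C σ lam₀ δ : ℝ} (hC : 0 < C) (hσ : 0 < σ)
    (hlam₀ : 0 < lam₀) (hδ : 0 < δ) (hupos : ∀ t, 0 < t → 0 < u t)
    (hudec : ∀ s t, 0 < s → s ≤ t → u t ≤ u s)
    (hint : ∀ l, 0 < l → IntegrableOn (fun t => exp (-(l * t)) * u t) (Ioi 0))
    (hΦpos : ∀ l, 0 < l → 0 < Φ l)
    (hΦA3 : ∀ x, 1 ≤ x → ∀ l, lam₀ ≤ l → Φ (l * x) ≤ σ * x ^ (-δ) * Φ l)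
    (hu : ∀ t, 0 < t → u t ≤ C * t ^ (-2 : ℝ) * Φ t⁻¹)
    (hlow : ∀ l, 0 < l → l * Φ l / 4 ≤ (∫ t in Ioi (0:ℝ), exp (-(l * t)) * u t) -
      ∫ t in Ioi (0:ℝ), exp (-(2 * l * t)) * u t) :
    ∃ ε, 0 < ε ∧ ∀ l, lam₀ ≤ l → l ^ 2 * Φ l / 8 ≤ u (ε / l) := by
  set A := C * σ / δ with hA
  have hA0 : 0 < A := by positivity
  obtain ⟨ε, hε, hε1, hεA⟩ : ∃ ε : ℝ, 0 < ε ∧ ε ≤ 1 ∧ A * ε ^ δ ≤ 1 / 8 := by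
    refine ⟨min 1 ((1 / (8 * A)) ^ δ⁻¹), by positivity, min_le_left _ _, ?_⟩
    calc A * (min 1 ((1 / (8 * A)) ^ δ⁻¹)) ^ δ ≤ A * ((1 / (8 * A)) ^ δ⁻¹) ^ δ := by
          gcongr
          exact min_le_right _ _
      _ = 1 / 8 := by
          rw [← rpow_mul (by positivity), inv_mul_cancel₀ hδ.ne', rpow_one]
          field_simp
  refine ⟨ε, hε, fun l hl => ?_⟩
  have hl0 : 0 < l := hlam₀.trans_le hl
  have hs : 0 < ε / l := by positivity
  have hΦl := hΦpos l hl0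
  have h1 := laplace_sub_le (B := C * σ * l ^ δ * Φ l) hupos hudec hint hl0 hs hδ ?_
  · have h2 := (hlow l hl0).trans h1
    have h3 : l * (C * σ * l ^ δ * Φ l) * ((ε / l) ^ δ / δ) = l * Φ l * (A * ε ^ δ) := by
      rw [div_rpow hε.le hl0.le, hA]
      have : l ^ δ ≠ 0 := (rpow_pos_of_pos hl0 δ).ne'
      field_simp
    have h4 : l * Φ l * (A * ε ^ δ) ≤ l * Φ l * (1 / 8) := by gcongr
    have h5 : l * Φ l / 8 ≤ u (ε / l) / l := by linarith
    rw [le_div_iff₀ hl0] at h5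
    linarith
  · intro t ht hts
    have htl : t * l ≤ 1 := ((le_div_iff₀ hl0).1 hts).trans hε1
    have h2 := hΦA3 (t * l)⁻¹ ((one_le_inv₀ (by positivity)).2 htl) l hl
    have h3 : l * (t * l)⁻¹ = t⁻¹ := by field_simp
    rw [h3, inv_rpow (by positivity), rpow_neg (by positivity), inv_inv,
      mul_rpow ht.le hl0.le] at h2
    have h4 : t ^ (δ - 1) = t * t ^ (-2 : ℝ) * t ^ δ := by
      rw [← rpow_one_add' ht.le (by norm_num), ← rpow_add ht]; ring_nf
    calc t * u t ≤ t * (C * t ^ (-2 : ℝ) * (σ * (t ^ δ * l ^ δ) * Φ l)) := by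
          gcongr
          exact (hu t ht).trans (by gcongr)
      _ = _ := by rw [h4]; ring

/-- Under (A-1) (decreasing potential density `u` with Laplace
transform `1/φ`), (A-3), transience (Chung–Fuchs criterion), and, for `d ≤ 2`,
condition (B), the radial Green function
`g(r) = ∫₀^∞ (4πt)^{−d/2} e^{−r²/(4t)} u(t) dt` satisfies
`g(r) ≍ r^{−d−2} φ'(r^{−2})/φ(r^{−2})²` as `r → 0+`. -/
theorem stmt_9 (d : ℕ) (hd : 1 ≤ d) (φ φ' u : ℝ → ℝ) (σ lam₀ δ : ℝ)
    (hφpos : ∀ l : ℝ, 0 < l → 0 < φ l)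
    (hφmono : ∀ s t : ℝ, 0 < s → s ≤ t → φ s ≤ φ t)
    (hderiv : ∀ l : ℝ, 0 < l → HasDerivAt φ (φ' l) l)
    (hφ'pos : ∀ l : ℝ, 0 < l → 0 < φ' l)
    (hφ'dec : ∀ s t : ℝ, 0 < s → s ≤ t → φ' t ≤ φ' s)
    (hη₂ : ∀ s t : ℝ, 0 < s → s ≤ t →
      s ^ 2 * φ' s / (φ s) ^ 2 ≤ t ^ 2 * φ' t / (φ t) ^ 2)
    (hσ : 0 < σ) (hlam₀ : 0 < lam₀) (hδ0 : 0 < δ) (hδ1 : δ ≤ 1)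
    (hA3 : ∀ x : ℝ, 1 ≤ x → ∀ l : ℝ, lam₀ ≤ l →
      φ' (l * x) ≤ σ * x ^ (-δ) * φ' l)
    (hupos : ∀ t : ℝ, 0 < t → 0 < u t)
    (hudec : ∀ s t : ℝ, 0 < s → s ≤ t → u t ≤ u s)
    (hlap : ∀ l : ℝ, 0 < l →
      (∫ t in Ioi (0:ℝ), Real.exp (-(l * t)) * u t) = 1 / φ l)
    (htrans : ∃ R : ℝ, 0 < R ∧
      IntegrableOn (fun l => l ^ ((d : ℝ) / 2 - 1) / φ l) (Ioo 0 R))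
    (hB : d ≤ 2 → 0 < (d : ℝ) + 2 * δ - 2 ∧
      ∃ σ' : ℝ, 0 < σ' ∧ ∃ δ' : ℝ,
        1 - (d : ℝ) / 2 < δ' ∧
        δ' < min (1 + (d : ℝ) / 2) (2 * δ + ((d : ℝ) - 2) / 2) ∧
        ∀ x : ℝ, 1 ≤ x → ∀ l : ℝ, lam₀ ≤ l →
          σ' * x ^ (-δ') * φ' l ≤ φ' (l * x)) :
    ∃ c₁ : ℝ, 0 < c₁ ∧ ∃ c₂ : ℝ, 0 < c₂ ∧ ∃ r₀ : ℝ, r₀ ∈ Ioo (0:ℝ) 1 ∧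
      ∀ r : ℝ, 0 < r → r < r₀ →
        c₁ * r ^ (-(d : ℝ) - 2) * (φ' ((r ^ 2)⁻¹) / (φ ((r ^ 2)⁻¹)) ^ 2)
            ≤ (∫ t in Ioi (0:ℝ),
                (4 * π * t) ^ (-(d : ℝ) / 2) * Real.exp (-(r ^ 2 / (4 * t))) * u t) ∧
        (∫ t in Ioi (0:ℝ),
            (4 * π * t) ^ (-(d : ℝ) / 2) * Real.exp (-(r ^ 2 / (4 * t))) * u t)
          ≤ c₂ * r ^ (-(d : ℝ) - 2) * (φ' ((r ^ 2)⁻¹) / (φ ((r ^ 2)⁻¹)) ^ 2) := by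
  set Φ : ℝ → ℝ := fun l => φ' l / φ l ^ 2 with hΦdef
  have hΦpos : ∀ l, 0 < l → 0 < Φ l := fun l hl =>
    div_pos (hφ'pos l hl) (pow_pos (hφpos l hl) 2)
  have hΦanti : ∀ s t, 0 < s → s ≤ t → Φ t ≤ Φ s := fun s t hs hst =>
    div_sq_antitone hφpos hφmono hφ'pos hφ'dec hs hst
  have hint : ∀ l, 0 < l → IntegrableOn (fun t => exp (-(l * t)) * u t) (Ioi 0) := by
    intro l hl
    by_contra h
    have h0 := hlap l hl
    rw [integral_undef h] at h0
    have := one_div_pos.2 (hφpos l hl)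
    linarith
  have hincr : ∀ l, 0 < l → (∫ t in Ioi (0:ℝ), exp (-(l * t)) * u t) -
      (∫ t in Ioi (0:ℝ), exp (-(2 * l * t)) * u t) = 1 / φ l - 1 / φ (2 * l) := fun l hl => by
    rw [hlap l hl, hlap (2 * l) (by positivity)]
  have hbd := fun l hl =>
    one_div_sub_one_div_bounds (l := l) hφpos hφmono hderiv hφ'pos hφ'dec hl
  obtain ⟨c, hc, hcu⟩ : ∃ c : ℝ, 0 < c ∧ ∀ t, 0 < t →
      t * u t ≤ c * (1 / φ t⁻¹ - 1 / φ (2 * t⁻¹)) := by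
    have hpos : 0 < exp (-1) * (1 - exp (-(1 / 2))) / 2 := by
      have : exp (-(1 / 2 : ℝ)) < 1 := by rw [exp_lt_one_iff]; norm_num
      have := exp_pos (-1)
      have : 0 < 1 - exp (-(1 / 2 : ℝ)) := by linarith
      positivity
    refine ⟨_, inv_pos.2 hpos, fun t ht => ?_⟩
    have h := mul_le_laplace_sub hupos hudec hint (inv_pos.2 ht)
    rw [hincr _ (inv_pos.2 ht), inv_inv] at h
    rwa [← div_eq_inv_mul, le_div_iff₀' hpos]
  have hu : ∀ t, 0 < t → u t ≤ c * t ^ (-2 : ℝ) * Φ t⁻¹ := fun t ht => by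
    have h1 := hcu t ht
    have h2 := (hbd t⁻¹ (inv_pos.2 ht)).2
    have h3 : t ^ (-2 : ℝ) = t⁻¹ * t⁻¹ := by
      rw [rpow_neg ht.le, rpow_two]; field_simp
    calc u t = t⁻¹ * (t * u t) := by field_simp
      _ ≤ t⁻¹ * (c * (t⁻¹ * Φ t⁻¹)) := by
          refine mul_le_mul_of_nonneg_left (h1.trans ?_) (inv_pos.2 ht).le
          exact mul_le_mul_of_nonneg_left h2 hc.le
      _ = _ := by rw [h3]; ring
  have hdouble : ∀ l x, 0 < l → 1 ≤ x → Φ l ≤ x ^ 2 * Φ (l * x) := fun l x hl hx => by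
    have h := hη₂ l (l * x) hl (le_mul_of_one_le_right hl.le hx)
    rw [mul_div_assoc, mul_div_assoc, mul_pow, mul_assoc] at h
    exact le_of_mul_le_mul_left h (by positivity)
  have hΦA3 : ∀ x, 1 ≤ x → ∀ l, lam₀ ≤ l → Φ (l * x) ≤ σ * x ^ (-δ) * Φ l := by
    intro x hx l hl
    have hl0 : 0 < l := hlam₀.trans_le hl
    have h1 := hA3 x hx l hl
    have h2 := hφmono l (l * x) hl0 (le_mul_of_one_le_right hl0.le hx)
    have h3 := hφpos l hl0
    have h4 := hφ'pos l hl0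
    calc Φ (l * x) ≤ (σ * x ^ (-δ) * φ' l) / φ l ^ 2 :=
          div_le_div₀ (by positivity) h1 (by positivity) (by gcongr)
      _ = _ := mul_div_assoc _ _ _
  obtain ⟨ε, hε, hlow⟩ := exists_le_potential hc hσ hlam₀ hδ0 hupos hudec hint hΦpos hΦA3 hu
    (fun l hl => by
      rw [hincr l hl]
      refine le_trans ?_ (hbd l hl).1
      have := hdouble l 2 hl one_le_two
      rw [mul_comm l 2] at this
      have h2 : Φ l / 4 ≤ Φ (2 * l) := by linarith
      calc l * Φ l / 4 = l * (Φ l / 4) := by ring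
        _ ≤ l * Φ (2 * l) := by gcongr)
  have hd0 : (1:ℝ) ≤ d := by exact_mod_cast hd
  set a : ℝ := (d : ℝ) / 2 with ha_def
  have ha : 0 < a := by positivity
  obtain ⟨β, K, hβ, hK, hscal⟩ : ∃ β K : ℝ, β < 1 + a ∧ 0 < K ∧
      ∀ l x, lam₀ ≤ l → 1 ≤ x → Φ l ≤ K * x ^ β * Φ (l * x) := by
    rcases le_or_gt d 2 with hd2 | hd2
    · obtain ⟨-, σ', hσ', δ', -, hδ', hB'⟩ := hB hd2
      have hδ'2 : δ' < 2 * δ + ((d : ℝ) - 2) / 2 := hδ'.trans_le (min_le_right _ _)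
      obtain ⟨γ, hγ1, hγ2⟩ : ∃ γ, (δ' + 1 - a) / 2 < γ ∧ γ < δ :=
        exists_between (by rw [ha_def]; linarith)
      have hγ : 0 < 1 - γ := by linarith
      refine ⟨δ' + 2 * (1 - γ), σ'⁻¹ * (1 + 2 * σ / (1 - γ)) ^ 2, by linarith, by positivity,
        fun l x hl hx => ?_⟩
      exact div_sq_le_rpow_mul hφpos hderiv hφ'pos hφ'dec hσ hlam₀ hσ' hA3 hB' hγ2.le
        (by linarith) hl hx
    · have hd3 : (3:ℝ) ≤ d := by exact_mod_cast hd2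
      refine ⟨2, 1, by rw [ha_def]; linarith, one_pos, fun l x hl hx => ?_⟩
      rw [one_mul, rpow_two]
      exact hdouble l x (hlam₀.trans_le hl) hx
  obtain ⟨R, hR, htr⟩ := htrans
  have hG : ∀ ρ, 0 < ρ → IntegrableOn
      (fun t => (4 * π * t) ^ (-a) * exp (-(ρ / (4 * t))) * u t) (Ioi 0) := fun ρ hρ =>
    integrableOn_green ha hρ hR hupos hudec hint (C := c) (φ := φ) (fun t ht => by
      refine (hcu t ht).trans (mul_le_mul_of_nonneg_left ?_ hc.le)
      have := one_div_pos.2 (hφpos (2 * t⁻¹) (by positivity))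
      linarith) htr
  obtain ⟨c₂, hc₂, hupper⟩ := green_upper (T := lam₀⁻¹) ha hβ hc hK (inv_pos.2 hlam₀) hupos hΦpos
    hΦanti hu (fun ρ t hρ hρt htT => by
      have ht : 0 < t := hρ.trans_le hρt
      have h := hscal t⁻¹ (t / ρ) ((le_inv_comm₀ ht hlam₀).1 htT) ((one_le_div hρ).2 hρt)
      rwa [show t⁻¹ * (t / ρ) = ρ⁻¹ by field_simp] at h) hG
  refine ⟨(4 * π * ε) ^ (-a) * exp (-(1 / (2 * ε))) * (ε / 2) * (1 / 8), by positivity, c₂, hc₂,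
    min (1 / 2) lam₀⁻¹, ⟨by positivity, (min_le_left _ _).trans_lt (by norm_num)⟩,
    fun r hr hr0 => ?_⟩
  obtain ⟨hr1, hr2⟩ : r < 1 / 2 ∧ r < lam₀⁻¹ := by
    simpa only [lt_min_iff] using hr0
  have hρ : 0 < r ^ 2 := by positivity
  have hρr : r ^ 2 ≤ r := by nlinarith
  have hρT : r ^ 2 ≤ lam₀⁻¹ := by linarith
  have hpow : r ^ (-(d : ℝ) - 2) = (r ^ 2) ^ (-a - 1) := by
    rw [← rpow_two, ← rpow_mul hr.le, ha_def]; ring_nf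
  rw [hpow, show -(d : ℝ) / 2 = -a by rw [ha_def]; ring]
  constructor
  · have h1 := hlow (r ^ 2)⁻¹ ((le_inv_comm₀ hρ hlam₀).1 hρT)
    rw [div_inv_eq_mul] at h1
    have h2 := green_lower (b := Φ (r ^ 2)⁻¹ / 8) ha hε hρ hupos hudec (hG _ hρ) (by
      rw [rpow_neg hρ.le, rpow_two]
      refine le_trans (le_of_eq ?_) h1
      rw [inv_pow]
      ring)
    refine le_trans (le_of_eq ?_) h2
    simp only [hΦdef]
    ring
  · rw [mul_assoc]
    exact hupper (r ^ 2) hρ (by linarith) hρT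
end

section
/- Let d ≥ 1 be an integer and A > 0. Let η : (0,∞) → (0,∞) be decreasing and ψ : (0,∞) → (0,∞) decreasing with λ ↦ λ² ψ(λ) increasing, and suppose there exist constants a₁, a₂ > 0 and t₀ ∈ (0,1] such that a₁ t^{−A} ψ(t^{−1}) ≤ η(t) ≤ a₂ t^{−A} ψ(t^{−1}) for all t ∈ (0, t₀]. Assume ∫₁^∞ t^{−d/2} η(t) dt < ∞, and assume either (i) A > 3 − d/2, or (ii) d ≤ 2 and there exist δ > 0 and c > 0 with A − δ > 1 − d/2 and ψ(λx) ≥ c x^{−δ} ψ(λ) for all x ≥ 1 and λ ≥ 1. If the integral I(r) = ∫₀^∞ (4πt)^{−d/2} exp(−r²/(4t)) η(t) dt exists for all sufficiently small r ∈ (0,1), then there exist constants c₁, c₂ > 0 and r₀ ∈ (0,1) such that c₁ r^{−d−2A+2} ψ(r^{−2}) ≤ I(r) ≤ c₂ r^{−d−2A+2} ψ(r^{−2}) for all 0 < r < r₀. -/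
open MeasureTheory Real Set

/-- A polynomially weighted exponential is bounded on `[1, ∞)`. -/
lemma exists_rpow_mul_exp_neg_le (p : ℝ) :
    ∃ C : ℝ, 0 < C ∧ ∀ u : ℝ, 1 ≤ u → u ^ p * exp (-(u / 4)) ≤ C := by
  obtain ⟨n, hn⟩ := exists_nat_ge p
  refine ⟨4 ^ n * n.factorial, by positivity, fun u hu => ?_⟩
  have hpow : u ^ p ≤ u ^ n := by
    rw [← rpow_natCast]
    exact rpow_le_rpow_of_exponent_le hu hn
  have hexp := Real.pow_div_factorial_le_exp (u / 4) (by positivity) n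
  rw [div_le_iff₀ (by positivity), div_pow, div_le_iff₀ (by positivity)] at hexp
  calc u ^ p * exp (-(u / 4))
      ≤ (exp (u / 4) * n.factorial * 4 ^ n) * exp (-(u / 4)) := by
        gcongr
        exact hpow.trans hexp
    _ = 4 ^ n * n.factorial * (exp (u / 4) * exp (-(u / 4))) := by ring
    _ = 4 ^ n * n.factorial := by rw [← exp_add]; simp

/-- The integrand of the Gaussian-kernel average, as a function of `s = r²` and `B = d / 2`. -/
noncomputable def gaussIntegrand (B : ℝ) (η : ℝ → ℝ) (s t : ℝ) : ℝ :=
  (4 * π * t) ^ (-B) * exp (-(s / (4 * t))) * η t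

section Bounds

variable {A B δ c a₁ a₂ t₀ s : ℝ} {η ψ : ℝ → ℝ}

lemma gaussIntegrand_nonneg (hη : ∀ t : ℝ, 0 < t → 0 < η t) {t : ℝ} (ht : 0 < t) :
    0 ≤ gaussIntegrand B η s t := by
  have := hη t ht
  unfold gaussIntegrand
  positivity

lemma gaussIntegrand_le {t y : ℝ} (ht : 0 < t) (hη : η t ≤ a₂ * t ^ (-A) * y) :
    gaussIntegrand B η s t
      ≤ (4 * π) ^ (-B) * a₂ * (t ^ (-(A + B)) * exp (-(s / (4 * t)))) * y := by
  unfold gaussIntegrand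
  have hpow : t ^ (-(A + B)) = t ^ (-A) * t ^ (-B) := by
    rw [← rpow_add ht]; ring_nf
  rw [mul_rpow (by positivity) ht.le, hpow]
  calc _ ≤ (4 * π) ^ (-B) * t ^ (-B) * exp (-(s / (4 * t))) * (a₂ * t ^ (-A) * y) := by gcongr
    _ = _ := by ring

/-- The part of the integral over `(s, 2s]` already has the claimed order. -/
lemma exists_le_integral_gaussIntegrand (hB : 0 < B)
    (hη : ∀ t : ℝ, 0 < t → 0 < η t)
    (hηdec : ∀ s t : ℝ, 0 < s → s ≤ t → η t ≤ η s)
    (hψdec : ∀ s t : ℝ, 0 < s → s ≤ t → ψ t ≤ ψ s) (ha₁ : 0 < a₁)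
    (hlow : ∀ t : ℝ, 0 < t → t ≤ t₀ → a₁ * t ^ (-A) * ψ t⁻¹ ≤ η t) :
    ∃ c₁ : ℝ, 0 < c₁ ∧ ∀ s : ℝ, 0 < s → 2 * s ≤ t₀ →
      IntegrableOn (gaussIntegrand B η s) (Ioi 0) →
      c₁ * s ^ (1 - (A + B)) * ψ s⁻¹ ≤ ∫ t in Ioi 0, gaussIntegrand B η s t := by
  refine ⟨(8 * π) ^ (-B) * exp (-(1 / 4)) * a₁ * 2 ^ (-A), by positivity,
    fun s hs hst hI => ?_⟩
  have hsub : Ioc s (2 * s) ⊆ Ioi 0 := fun t ht => hs.trans ht.1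
  have hpoint : ∀ t ∈ Ioc s (2 * s),
      (8 * π * s) ^ (-B) * exp (-(1 / 4)) * (a₁ * (2 * s) ^ (-A) * ψ s⁻¹)
        ≤ gaussIntegrand B η s t := by
    intro t ht
    have ht0 : 0 < t := hsub ht
    have hψs : ψ s⁻¹ ≤ ψ (2 * s)⁻¹ :=
      hψdec _ _ (by positivity) (by gcongr; linarith)
    have hηt : a₁ * (2 * s) ^ (-A) * ψ s⁻¹ ≤ η t := by
      calc _ ≤ a₁ * (2 * s) ^ (-A) * ψ (2 * s)⁻¹ := by gcongr
        _ ≤ η (2 * s) := hlow _ (by positivity) hst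
        _ ≤ η t := hηdec _ _ ht0 ht.2
    have hpow : (8 * π * s) ^ (-B) ≤ (4 * π * t) ^ (-B) := by
      apply rpow_le_rpow_of_nonpos (by positivity) _ (by linarith)
      nlinarith [pi_pos, ht.2]
    have hexp : exp (-(1 / 4)) ≤ exp (-(s / (4 * t))) := by
      rw [exp_le_exp, neg_le_neg_iff, div_le_div_iff₀ (by positivity) (by norm_num)]
      linarith [ht.1]
    have := hη t ht0
    unfold gaussIntegrand
    calc _ ≤ (8 * π * s) ^ (-B) * exp (-(1 / 4)) * η t := by gcongr
      _ ≤ _ := by gcongr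
  have hmono : ∫ t in Ioc s (2 * s), gaussIntegrand B η s t
      ≤ ∫ t in Ioi 0, gaussIntegrand B η s t :=
    setIntegral_mono_set hI
      ((ae_restrict_iff' measurableSet_Ioi).2
        (Filter.Eventually.of_forall fun t ht => gaussIntegrand_nonneg hη ht))
      hsub.eventuallyLE
  refine le_trans ?_ hmono
  have hconst := setIntegral_mono_on (integrableOn_const (by simp)) (hI.mono_set hsub)
    measurableSet_Ioc hpoint
  refine le_trans (le_of_eq ?_) hconst
  have hpow : s ^ (1 - (A + B)) = s * (s ^ (-A) * s ^ (-B)) := by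
    rw [sub_eq_add_neg, neg_add, rpow_add hs, rpow_add hs, rpow_one]
  rw [setIntegral_const, Measure.real, Real.volume_Ioc,
    ENNReal.toReal_ofReal (by linarith), smul_eq_mul, mul_rpow (by positivity) hs.le,
    mul_rpow (by positivity) hs.le, hpow]
  ring

/-- The part of the integral over `(0, s]` is controlled by the Gaussian decay. -/
lemma exists_setIntegral_Ioc_zero_le (hψpos : ∀ l : ℝ, 0 < l → 0 < ψ l)
    (hψdec : ∀ s t : ℝ, 0 < s → s ≤ t → ψ t ≤ ψ s) (ha₂ : 0 < a₂)
    (hup : ∀ t : ℝ, 0 < t → t ≤ t₀ → η t ≤ a₂ * t ^ (-A) * ψ t⁻¹) :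
    ∃ C : ℝ, 0 < C ∧ ∀ s : ℝ, 0 < s → s ≤ t₀ →
      IntegrableOn (gaussIntegrand B η s) (Ioi 0) →
      ∫ t in Ioc 0 s, gaussIntegrand B η s t ≤ C * s ^ (1 - (A + B)) * ψ s⁻¹ := by
  obtain ⟨C, hC, hexp⟩ := exists_rpow_mul_exp_neg_le (A + B)
  refine ⟨(4 * π) ^ (-B) * a₂ * C, by positivity, fun s hs hst hI => ?_⟩
  have hpoint : ∀ t ∈ Ioc 0 s, gaussIntegrand B η s t
      ≤ (4 * π) ^ (-B) * a₂ * (C * s ^ (-(A + B))) * ψ s⁻¹ := by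
    intro t ht
    have ht0 : 0 < t := ht.1
    have hψt : ψ t⁻¹ ≤ ψ s⁻¹ :=
      hψdec _ _ (by positivity) (inv_anti₀ ht0 ht.2)
    have hψ0 := hψpos s⁻¹ (by positivity)
    have hηt : η t ≤ a₂ * t ^ (-A) * ψ s⁻¹ :=
      (hup t ht0 (ht.2.trans hst)).trans (by gcongr)
    refine (gaussIntegrand_le ht0 hηt).trans ?_
    have hu := hexp (s / t) ((one_le_div ht0).2 ht.2)
    rw [div_rpow hs.le ht0.le, div_div, mul_comm t 4] at hu
    have hdecay : t ^ (-(A + B)) * exp (-(s / (4 * t))) ≤ C * s ^ (-(A + B)) := by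
      rw [rpow_neg ht0.le, rpow_neg hs.le, ← div_eq_mul_inv, le_div_iff₀ (by positivity)]
      calc _ = s ^ (A + B) / t ^ (A + B) * exp (-(s / (4 * t))) := by ring
        _ ≤ C := hu
    exact mul_le_mul_of_nonneg_right (mul_le_mul_of_nonneg_left hdecay (by positivity)) hψ0.le
  have hconst := setIntegral_mono_on (hI.mono_set Ioc_subset_Ioi_self)
    (integrableOn_const (by simp)) measurableSet_Ioc hpoint
  refine hconst.trans (le_of_eq ?_)
  rw [setIntegral_const, Measure.real, Real.volume_Ioc,
    ENNReal.toReal_ofReal (by linarith), smul_eq_mul, sub_eq_add_neg 1, rpow_add hs, rpow_one]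
  ring

/-- The part of the integral over `(s, t₀]` is controlled by the lower scaling of `ψ`. -/
lemma exists_setIntegral_Ioc_le (hψpos : ∀ l : ℝ, 0 < l → 0 < ψ l) (ha₂ : 0 < a₂)
    (ht₀ : t₀ ≤ 1) (hup : ∀ t : ℝ, 0 < t → t ≤ t₀ → η t ≤ a₂ * t ^ (-A) * ψ t⁻¹)
    (hc : 0 < c) (hδ : 1 + δ < A + B)
    (hscal : ∀ x : ℝ, 1 ≤ x → ∀ l : ℝ, 1 ≤ l → c * x ^ (-δ) * ψ l ≤ ψ (l * x)) :
    ∃ C : ℝ, 0 < C ∧ ∀ s : ℝ, 0 < s →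
      IntegrableOn (gaussIntegrand B η s) (Ioi 0) →
      ∫ t in Ioc s t₀, gaussIntegrand B η s t ≤ C * s ^ (1 - (A + B)) * ψ s⁻¹ := by
  have hgap : 0 < A + B - δ - 1 := by linarith
  refine ⟨(4 * π) ^ (-B) * a₂ * c⁻¹ * (A + B - δ - 1)⁻¹, by positivity, fun s hs hI => ?_⟩
  have hψs := hψpos s⁻¹ (by positivity)
  set K := (4 * π) ^ (-B) * a₂ * c⁻¹ * s ^ (-δ) * ψ s⁻¹ with hK
  have hpoint : ∀ t ∈ Ioc s t₀, gaussIntegrand B η s t ≤ K * t ^ (δ - (A + B)) := by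
    intro t ht
    have ht0 : 0 < t := hs.trans ht.1
    have hψt : ψ t⁻¹ ≤ c⁻¹ * (t ^ δ * s ^ (-δ)) * ψ s⁻¹ := by
      have h := hscal (t / s) ((one_le_div hs).2 ht.1.le) t⁻¹
        ((one_le_inv₀ ht0).2 (ht.2.trans ht₀))
      have hts : t⁻¹ * (t / s) = s⁻¹ := by field_simp
      rw [hts, rpow_neg (by positivity), div_rpow ht0.le hs.le] at h
      rw [rpow_neg hs.le]
      calc ψ t⁻¹ = c⁻¹ * (t ^ δ * (s ^ δ)⁻¹) * (c * (t ^ δ / s ^ δ)⁻¹ * ψ t⁻¹) := by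
            field_simp
        _ ≤ _ := by gcongr
    have hηt : η t ≤ a₂ * t ^ (-A) * (c⁻¹ * (t ^ δ * s ^ (-δ)) * ψ s⁻¹) :=
      (hup t ht0 ht.2).trans (by gcongr)
    refine (gaussIntegrand_le ht0 hηt).trans ?_
    have hexp : exp (-(s / (4 * t))) ≤ 1 :=
      exp_le_one_iff.2 (neg_nonpos.2 (by positivity))
    calc _ ≤ (4 * π) ^ (-B) * a₂ * (t ^ (-(A + B)) * 1)
          * (c⁻¹ * (t ^ δ * s ^ (-δ)) * ψ s⁻¹) := by gcongr
      _ = K * t ^ (δ - (A + B)) := by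
        rw [hK, sub_eq_add_neg δ, rpow_add ht0]
        ring
  have hK0 : 0 < K := by positivity
  have hlt : δ - (A + B) < -1 := by linarith
  have hpowI : IntegrableOn (fun t : ℝ => K * t ^ (δ - (A + B))) (Ioi s) :=
    (integrableOn_Ioi_rpow_of_lt hlt hs).const_mul K
  calc ∫ t in Ioc s t₀, gaussIntegrand B η s t
      ≤ ∫ t in Ioc s t₀, K * t ^ (δ - (A + B)) :=
        setIntegral_mono_on (hI.mono_set fun t ht => hs.trans ht.1)
          (hpowI.mono_set Ioc_subset_Ioi_self) measurableSet_Ioc hpoint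
    _ ≤ ∫ t in Ioi s, K * t ^ (δ - (A + B)) :=
        setIntegral_mono_set hpowI
          ((ae_restrict_iff' measurableSet_Ioi).2 (Filter.Eventually.of_forall fun t ht => by
            have : 0 < t := hs.trans ht
            simp only [Pi.zero_apply]
            positivity))
          Ioc_subset_Ioi_self.eventuallyLE
    _ = _ := by
        have hpow : s ^ (1 - (A + B)) = s ^ (-δ) * s ^ (δ - (A + B) + 1) := by
          rw [← rpow_add hs]
          ring_nf
        have hden : δ - (A + B) + 1 = -(A + B - δ - 1) := by ring
        rw [integral_const_mul, integral_Ioi_rpow_of_lt hlt hs, hpow, hK, neg_div, hden,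
          div_neg, neg_neg]
        ring

/-- The part of the integral over `(t₀, ∞)` is bounded uniformly in `s`. -/
lemma exists_setIntegral_Ioi_le (hη : ∀ t : ℝ, 0 < t → 0 < η t) (ht₀ : 0 < t₀) {s₁ : ℝ}
    (hs₁ : 0 < s₁) (hI₁ : IntegrableOn (gaussIntegrand B η s₁) (Ioi 0)) :
    ∃ K : ℝ, 0 ≤ K ∧ ∀ s : ℝ, 0 < s →
      IntegrableOn (gaussIntegrand B η s) (Ioi 0) →
      ∫ t in Ioi t₀, gaussIntegrand B η s t ≤ K := by
  have hsub : Ioi t₀ ⊆ Ioi 0 := Ioi_subset_Ioi ht₀.le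
  refine ⟨∫ t in Ioi t₀, exp (s₁ / (4 * t₀)) * gaussIntegrand B η s₁ t, ?_, fun s hs hI => ?_⟩
  · exact setIntegral_nonneg measurableSet_Ioi fun t ht =>
      mul_nonneg (exp_pos _).le (gaussIntegrand_nonneg hη (hsub ht))
  refine setIntegral_mono_on (hI.mono_set hsub) ((hI₁.mono_set hsub).const_mul _)
    measurableSet_Ioi fun t ht => ?_
  have ht0 : 0 < t := hsub ht
  have hexp : exp (-(s / (4 * t))) ≤ exp (s₁ / (4 * t₀)) * exp (-(s₁ / (4 * t))) := by
    rw [← exp_add, exp_le_exp]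
    have h1 : s₁ / (4 * t) ≤ s₁ / (4 * t₀) := by
      gcongr
      exact (mem_Ioi.1 ht).le
    have h2 : 0 < s / (4 * t) := by positivity
    linarith
  have := hη t ht0
  unfold gaussIntegrand
  calc _ ≤ (4 * π * t) ^ (-B) * (exp (s₁ / (4 * t₀)) * exp (-(s₁ / (4 * t)))) * η t := by gcongr
    _ = _ := by ring

lemma le_rpow_mul_of_scaling (hψpos : ∀ l : ℝ, 0 < l → 0 < ψ l) (hc : 0 < c)
    (hδ : 1 + δ < A + B)
    (hscal : ∀ x : ℝ, 1 ≤ x → ∀ l : ℝ, 1 ≤ l → c * x ^ (-δ) * ψ l ≤ ψ (l * x))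
    (hs : 0 < s) (hs1 : s ≤ 1) : c * ψ 1 ≤ s ^ (1 - (A + B)) * ψ s⁻¹ := by
  have hψ1 := hψpos 1 one_pos
  have h := hscal s⁻¹ ((one_le_inv₀ hs).2 hs1) 1 le_rfl
  rw [one_mul, inv_rpow hs.le, rpow_neg hs.le, inv_inv] at h
  have hone : 1 ≤ s ^ (1 - (A + B)) * s ^ δ := by
    rw [← rpow_add hs]
    exact one_le_rpow_of_pos_of_le_one_of_nonpos hs hs1 (by linarith)
  calc c * ψ 1 ≤ (s ^ (1 - (A + B)) * s ^ δ) * (c * ψ 1) :=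
        le_mul_of_one_le_left (by positivity) hone
    _ = s ^ (1 - (A + B)) * (c * s ^ δ * ψ 1) := by ring
    _ ≤ _ := by gcongr

lemma exists_integral_gaussIntegrand_le (hη : ∀ t : ℝ, 0 < t → 0 < η t)
    (hψpos : ∀ l : ℝ, 0 < l → 0 < ψ l)
    (hψdec : ∀ s t : ℝ, 0 < s → s ≤ t → ψ t ≤ ψ s) (ha₂ : 0 < a₂) (ht₀ : t₀ ∈ Ioc (0 : ℝ) 1)
    (hup : ∀ t : ℝ, 0 < t → t ≤ t₀ → η t ≤ a₂ * t ^ (-A) * ψ t⁻¹)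
    (hc : 0 < c) (hδ : 1 + δ < A + B)
    (hscal : ∀ x : ℝ, 1 ≤ x → ∀ l : ℝ, 1 ≤ l → c * x ^ (-δ) * ψ l ≤ ψ (l * x)) {s₁ : ℝ}
    (hs₁ : 0 < s₁) (hI₁ : IntegrableOn (gaussIntegrand B η s₁) (Ioi 0)) :
    ∃ c₂ : ℝ, 0 < c₂ ∧ ∀ s : ℝ, 0 < s → s ≤ t₀ →
      IntegrableOn (gaussIntegrand B η s) (Ioi 0) →
      ∫ t in Ioi 0, gaussIntegrand B η s t ≤ c₂ * s ^ (1 - (A + B)) * ψ s⁻¹ := by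
  obtain ⟨C, hC, hnear⟩ := exists_setIntegral_Ioc_zero_le (B := B) hψpos hψdec ha₂ hup
  obtain ⟨D, hD, hmid⟩ := exists_setIntegral_Ioc_le (B := B) hψpos ha₂ ht₀.2 hup hc hδ hscal
  obtain ⟨K, hK, hfar⟩ := exists_setIntegral_Ioi_le hη ht₀.1 hs₁ hI₁
  have hψ1 := hψpos 1 one_pos
  refine ⟨C + D + K / (c * ψ 1), by positivity, fun s hs hst hI => ?_⟩
  have hsplit : ∫ t in Ioi 0, gaussIntegrand B η s t
      = (∫ t in Ioc 0 s, gaussIntegrand B η s t) + (∫ t in Ioc s t₀, gaussIntegrand B η s t)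
        + ∫ t in Ioi t₀, gaussIntegrand B η s t := by
    rw [← Ioc_union_Ioi_eq_Ioi hs.le,
      setIntegral_union (Ioc_disjoint_Ioi le_rfl) measurableSet_Ioi
        (hI.mono_set Ioc_subset_Ioi_self) (hI.mono_set (Ioi_subset_Ioi hs.le)),
      ← Ioc_union_Ioi_eq_Ioi hst,
      setIntegral_union (Ioc_disjoint_Ioi le_rfl) measurableSet_Ioi
        (hI.mono_set fun t ht => hs.trans ht.1) (hI.mono_set (Ioi_subset_Ioi ht₀.1.le)),
      add_assoc]
  have hconst : K ≤ K / (c * ψ 1) * (s ^ (1 - (A + B)) * ψ s⁻¹) := by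
    calc K = K / (c * ψ 1) * (c * ψ 1) := by field_simp
      _ ≤ _ := mul_le_mul_of_nonneg_left
        (le_rpow_mul_of_scaling hψpos hc hδ hscal hs (hst.trans ht₀.2)) (by positivity)
  rw [hsplit]
  linarith [hnear s hs hst hI, hmid s hs hI, hfar s hs hI]

end Bounds

/-- Proposition A.3: Let `η, ψ : (0,∞) → (0,∞)` be decreasing
with `λ ↦ λ²ψ(λ)` increasing and `η(t) ≍ t^{−A} ψ(t^{−1})` on `(0,t₀]`; assume
`∫₁^∞ t^{−d/2} η(t) dt < ∞`, and either (i) `A > 3 − d/2`, or (ii) `d ≤ 2` and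
there are `δ, c > 0` with `A − δ > 1 − d/2` and `ψ(λx) ≥ c x^{−δ} ψ(λ)` for
`x ≥ 1`, `λ ≥ 1`. If `I(r) = ∫₀^∞ (4πt)^{−d/2} e^{−r²/(4t)} η(t) dt` exists
for all small `r ∈ (0,1)`, then `I(r) ≍ r^{−d−2A+2} ψ(r^{−2})` as `r → 0+`. -/
theorem stmt_13 (d : ℕ) (hd : 1 ≤ d) (A : ℝ) (hA : 0 < A)
    (η ψ : ℝ → ℝ)
    (hηpos : ∀ t : ℝ, 0 < t → 0 < η t)
    (hηdec : ∀ s t : ℝ, 0 < s → s ≤ t → η t ≤ η s)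
    (hψpos : ∀ l : ℝ, 0 < l → 0 < ψ l)
    (hψdec : ∀ s t : ℝ, 0 < s → s ≤ t → ψ t ≤ ψ s)
    (hψ2 : ∀ s t : ℝ, 0 < s → s ≤ t → s ^ 2 * ψ s ≤ t ^ 2 * ψ t)
    (a₁ a₂ t₀ : ℝ) (ha₁ : 0 < a₁) (ha₂ : 0 < a₂) (ht₀ : t₀ ∈ Ioc (0:ℝ) 1)
    (hcomp : ∀ t : ℝ, 0 < t → t ≤ t₀ →
      a₁ * t ^ (-A) * ψ t⁻¹ ≤ η t ∧ η t ≤ a₂ * t ^ (-A) * ψ t⁻¹)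
    (hint : IntegrableOn (fun t => t ^ (-(d : ℝ) / 2) * η t) (Ioi 1))
    (hcase : A > 3 - (d : ℝ) / 2 ∨
      (d ≤ 2 ∧ ∃ δ : ℝ, 0 < δ ∧ ∃ c : ℝ, 0 < c ∧ A - δ > 1 - (d : ℝ) / 2 ∧
        ∀ x : ℝ, 1 ≤ x → ∀ l : ℝ, 1 ≤ l → c * x ^ (-δ) * ψ l ≤ ψ (l * x)))
    (hexist : ∃ r₁ : ℝ, r₁ ∈ Ioo (0:ℝ) 1 ∧ ∀ r : ℝ, 0 < r → r < r₁ →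
      IntegrableOn
        (fun t => (4 * π * t) ^ (-(d : ℝ) / 2) * Real.exp (-(r ^ 2 / (4 * t))) * η t)
        (Ioi 0)) :
    ∃ c₁ : ℝ, 0 < c₁ ∧ ∃ c₂ : ℝ, 0 < c₂ ∧ ∃ r₀ : ℝ, r₀ ∈ Ioo (0:ℝ) 1 ∧
      ∀ r : ℝ, 0 < r → r < r₀ →
        c₁ * r ^ (-(d : ℝ) - 2 * A + 2) * ψ ((r ^ 2)⁻¹)
            ≤ (∫ t in Ioi (0:ℝ),
                (4 * π * t) ^ (-(d : ℝ) / 2) * Real.exp (-(r ^ 2 / (4 * t))) * η t) ∧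
        (∫ t in Ioi (0:ℝ),
            (4 * π * t) ^ (-(d : ℝ) / 2) * Real.exp (-(r ^ 2 / (4 * t))) * η t)
          ≤ c₂ * r ^ (-(d : ℝ) - 2 * A + 2) * ψ ((r ^ 2)⁻¹) := by
  obtain ⟨δ, c, hc, hδ, hscal⟩ : ∃ δ c : ℝ, 0 < c ∧ 1 + δ < A + (d : ℝ) / 2 ∧
      ∀ x : ℝ, 1 ≤ x → ∀ l : ℝ, 1 ≤ l → c * x ^ (-δ) * ψ l ≤ ψ (l * x) := by
    rcases hcase with h | ⟨-, δ, -, c, hc, h, hscal⟩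
    · refine ⟨2, 1, one_pos, by linarith, fun x hx l hl => ?_⟩
      have hmono := hψ2 l (l * x) (by linarith) (le_mul_of_one_le_right (by linarith) hx)
      rw [rpow_neg (by linarith), rpow_two, one_mul, inv_mul_le_iff₀ (by positivity)]
      refine le_of_mul_le_mul_left ?_ (by positivity : 0 < l ^ 2)
      linarith
    · exact ⟨δ, c, hc, by linarith, hscal⟩
  obtain ⟨r₁, ⟨hr₁, hr₁'⟩, hexist⟩ := hexist
  simp only [neg_div] at hexist ⊢
  have hd0 : (0 : ℝ) < d := by exact_mod_cast hd
  have ht₀pos : 0 < t₀ := ht₀.1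
  obtain ⟨c₁, hc₁, hlower⟩ := exists_le_integral_gaussIntegrand (B := (d : ℝ) / 2)
    (by positivity) hηpos hηdec hψdec ha₁ fun t ht ht' => (hcomp t ht ht').1
  obtain ⟨c₂, hc₂, hupper⟩ := exists_integral_gaussIntegrand_le (B := (d : ℝ) / 2) hηpos hψpos
    hψdec ha₂ ht₀ (fun t ht ht' => (hcomp t ht ht').2) hc hδ hscal
    (s₁ := (r₁ / 2) ^ 2) (by positivity) (hexist (r₁ / 2) (by positivity) (by linarith))
  refine ⟨c₁, hc₁, c₂, hc₂, min r₁ (t₀ / 2), ⟨by positivity, (min_le_left _ _).trans_lt hr₁'⟩,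
    fun r hr hlt => ?_⟩
  obtain ⟨hrr₁, hrt₀⟩ := lt_min_iff.1 hlt
  have hr2 : 2 * r ^ 2 ≤ t₀ := by nlinarith
  have hpow : r ^ (-(d : ℝ) - 2 * A + 2) = (r ^ 2) ^ (1 - (A + (d : ℝ) / 2)) := by
    rw [← rpow_two, ← rpow_mul hr.le]
    ring_nf
  rw [hpow]
  exact ⟨hlower (r ^ 2) (by positivity) hr2 (hexist r hr hrr₁),
    hupper (r ^ 2) (by positivity) (by nlinarith) (hexist r hr hrr₁)⟩
end
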